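/- arXiv:2511.12157 — 3 statements merged into one kernel-verified Lean document; each statement's English description precedes it below -/
import Mathlib

section
/- Let F, Φ : ℝ^N → ℝ be convex and differentiable, and suppose F satisfies the BRSC property with respect to Φ, a convex set X ⊆ ℝ^N, and K, with constant C > 0. Let ω ⊆ {1,…,N} with #ω ≤ K, and set X_ω := {u ∈ ℝ^{#ω} : Z_ω(u) ∈ X}, F_ω(u) := F(Z_ω(u)), Φ_ω(u) := Φ(Z_ω(u)). Then: (i) the function u ↦ F_ω(u) − C·Φ_ω(u) is convex on X_ω; (ii) for all u, u' ∈ X_ω, F_ω(u) ≥ F_ω(u') + ⟨∇F_ω(u'), u − u'⟩ + C·(Φ_ω(u) − Φ_ω(u') − ⟨∇Φ_ω(u'), u − u'⟩). -/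
open Classical

noncomputable section

/-- `‖x‖₀`: the number of nonzero entries of a vector. -/
def norm0 {ι : Type*} [Fintype ι] (x : ι → ℝ) : ℕ :=
  (Finset.univ.filter fun i => x i ≠ 0).card

/-- Euclidean inner product on `ι → ℝ`. -/
def dotp {ι : Type*} [Fintype ι] (x y : ι → ℝ) : ℝ := ∑ i, x i * y i

/-- squared Euclidean norm. -/
def sqnorm {ι : Type*} [Fintype ι] (x : ι → ℝ) : ℝ := ∑ i, (x i) ^ 2

/-- Euclidean norm. -/
def enorm2 {ι : Type*} [Fintype ι] (x : ι → ℝ) : ℝ := Real.sqrt (sqnorm x)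

/-- gradient via the Fréchet derivative: `(grad F x) i = ∂F/∂x_i(x)`. -/
def grad {ι : Type*} [Fintype ι] [DecidableEq ι] (F : (ι → ℝ) → ℝ) (x : ι → ℝ) : ι → ℝ :=
  fun i => fderiv ℝ F x (Pi.single i 1)

/-- `F` satisfies the Bregman Restricted Strong Convexity property with respect to `Φ`,
the set `X`, and the integer `K`, with constant `C`.  The set `D` stands for the common
interior of the domains of `F` and `Φ`. -/
def BRSC {n : Type*} [Fintype n] [DecidableEq n]
    (F Φ : (n → ℝ) → ℝ) (X D : Set (n → ℝ)) (K : ℕ) (C : ℝ) : Prop :=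
  ∀ x ∈ X, ∀ x' ∈ D, x ≠ x' → norm0 (x - x') ≤ K →
    C * dotp (grad Φ x - grad Φ x') (x - x') ≤ dotp (grad F x - grad F x') (x - x')

/-- zero padding operator: the entries indexed by `σ` equal those of `u`, others are `0`. -/
def zpad {N : ℕ} (σ : Finset (Fin N)) (u : {i // i ∈ σ} → ℝ) : Fin N → ℝ :=
  fun i => if h : i ∈ σ then u ⟨i, h⟩ else 0

/-!
Put `G = F - C • Φ`. The BRSC inequality says that `∇G` is monotone along `K`-sparse differences.
On the coordinate subspace of `ω` every difference is `K`-sparse, so `∇G_ω` is monotone there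
without restriction. By the mean value theorem a monotone gradient makes every tangent plane a
lower bound, which is (ii); a function supported from below by an affine function at each point is
convex, which is (i).
-/

section FirstOrderConvexity

theorem convexOn_of_exists_le_linearMap {𝕜 E : Type*} [CommRing 𝕜] [PartialOrder 𝕜]
    [IsOrderedRing 𝕜] [AddCommGroup E] [Module 𝕜 E] {s : Set E} {f : E → 𝕜} (hs : Convex 𝕜 s)
    (hf : ∀ x ∈ s, ∃ g : E →ₗ[𝕜] 𝕜, ∀ y ∈ s, f x + g (y - x) ≤ f y) : ConvexOn 𝕜 s f := by
  refine ⟨hs, fun x hx y hy a b ha hb hab => ?_⟩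
  set m := a • x + b • y with hm
  obtain ⟨g, hg⟩ := hf m (hs hx hy ha hb hab)
  have hmean : a • (x - m) + b • (y - m) = 0 := by
    rw [smul_sub, smul_sub, sub_add_sub_comm, ← add_smul, hab, one_smul, ← hm, sub_self]
  have hgmean : a * g (x - m) + b * g (y - m) = 0 := by
    simpa only [map_add, map_smul, smul_eq_mul, map_zero] using congrArg g hmean
  calc f m = (a + b) * f m + (a * g (x - m) + b * g (y - m)) := by
        rw [hab, hgmean, one_mul, add_zero]
    _ = a * (f m + g (x - m)) + b * (f m + g (y - m)) := by ring
    _ ≤ a * f x + b * f y :=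
      add_le_add (mul_le_mul_of_nonneg_left (hg x hx) ha) (mul_le_mul_of_nonneg_left (hg y hy) hb)

variable {E : Type*} [NormedAddCommGroup E] [NormedSpace ℝ E] {f : E → ℝ}

theorem add_fderiv_sub_le_of_forall_segment {x y : E}
    (hd : ∀ z ∈ segment ℝ x y, DifferentiableAt ℝ f z)
    (hmono : ∀ z ∈ segment ℝ x y, 0 ≤ (fderiv ℝ f x - fderiv ℝ f z) (x - z)) :
    f x + fderiv ℝ f x (y - x) ≤ f y := by
  obtain ⟨z, hz, hslope⟩ := domain_mvt (fun z hz => (hd z hz).hasFDerivAt.hasFDerivWithinAt)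
    (convex_segment x y) (left_mem_segment ℝ x y) (right_mem_segment ℝ x y)
  suffices fderiv ℝ f x (y - x) ≤ fderiv ℝ f z (y - x) by linarith
  have hmono_z := hmono z hz
  rw [segment_eq_image'] at hz
  obtain ⟨t, ⟨ht, -⟩, rfl⟩ := hz
  rcases ht.eq_or_lt with rfl | ht
  · simp
  rw [sub_add_cancel_left, map_neg, map_smul, smul_eq_mul, sub_apply] at hmono_z
  exact le_of_mul_le_mul_left (by linarith) ht

theorem convexOn_of_fderiv_monotone {s : Set E} (hs : Convex ℝ s)
    (hd : ∀ x ∈ s, DifferentiableAt ℝ f x)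
    (hmono : ∀ x ∈ s, ∀ y ∈ s, 0 ≤ (fderiv ℝ f x - fderiv ℝ f y) (x - y)) : ConvexOn ℝ s f :=
  convexOn_of_exists_le_linearMap hs fun x hx => ⟨fderiv ℝ f x, fun _ hy =>
    have hseg := hs.segment_subset hx hy
    add_fderiv_sub_le_of_forall_segment (fun z hz => hd z (hseg hz))
      fun z hz => hmono x hx z (hseg hz)⟩

end FirstOrderConvexity

section SparsityAndGradient

variable {n : Type*} [Fintype n]

theorem norm0_le_card (x : n → ℝ) : norm0 x ≤ Fintype.card n :=
  Finset.card_le_univ _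

theorem norm0_smul_le (c : ℝ) (x : n → ℝ) : norm0 (c • x) ≤ norm0 x :=
  Finset.card_le_card <| Finset.monotone_filter_right _ fun _ _ => right_ne_zero_of_mul

variable [DecidableEq n]

theorem dotp_grad (F : (n → ℝ) → ℝ) (x v : n → ℝ) : dotp (grad F x) v = fderiv ℝ F x v := by
  conv_rhs => rw [pi_eq_sum_univ' v, map_sum]
  simp only [dotp, grad, map_smul, smul_eq_mul, mul_comm]

theorem dotp_grad_sub_grad (F : (n → ℝ) → ℝ) (x y v : n → ℝ) :
    dotp (grad F x - grad F y) v = (fderiv ℝ F x - fderiv ℝ F y) v := by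
  rw [sub_apply, ← dotp_grad, ← dotp_grad]
  exact sub_dotProduct _ _ _

end SparsityAndGradient

namespace BRSC

variable {n : Type*} [Fintype n] [DecidableEq n] {F Φ : (n → ℝ) → ℝ} {X D : Set (n → ℝ)}
  {K : ℕ} {C : ℝ} {x y : n → ℝ}

theorem fderiv_sub_smul_monotone (h : BRSC F Φ X D K C) (hx : x ∈ X) (hy : y ∈ D)
    (hK : norm0 (x - y) ≤ K) (hFx : DifferentiableAt ℝ F x) (hFy : DifferentiableAt ℝ F y)
    (hΦx : DifferentiableAt ℝ Φ x) (hΦy : DifferentiableAt ℝ Φ y) :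
    0 ≤ (fderiv ℝ (F - C • Φ) x - fderiv ℝ (F - C • Φ) y) (x - y) := by
  rcases eq_or_ne x y with rfl | hxy
  · simp
  have hBregman := h x hx y hy hxy hK
  rw [dotp_grad_sub_grad, dotp_grad_sub_grad] at hBregman
  rw [fderiv_sub hFx (hΦx.const_smul C), fderiv_sub hFy (hΦy.const_smul C),
    fderiv_const_smul hΦx, fderiv_const_smul hΦy, sub_sub_sub_comm, ← smul_sub C (fderiv ℝ Φ x)]
  exact sub_nonneg.2 hBregman

theorem convexOn_sub_smul (h : BRSC F Φ X D K C) (hX : Convex ℝ X) (hXD : X ⊆ D)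
    (hF : ∀ z ∈ D, DifferentiableAt ℝ F z) (hΦ : ∀ z ∈ D, DifferentiableAt ℝ Φ z)
    (hK : ∀ x ∈ X, ∀ y ∈ X, norm0 (x - y) ≤ K) : ConvexOn ℝ X (F - C • Φ) :=
  convexOn_of_fderiv_monotone hX
    (fun x hx => (hF x (hXD hx)).sub ((hΦ x (hXD hx)).const_smul C))
    fun x hx y hy => h.fderiv_sub_smul_monotone hx (hXD hy) (hK x hx y hy)
      (hF x (hXD hx)) (hF y (hXD hy)) (hΦ x (hXD hx)) (hΦ y (hXD hy))

theorem add_dotp_grad_le (h : BRSC F Φ X D K C) (hx : x ∈ X) (hseg : segment ℝ x y ⊆ D)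
    (hF : ∀ z ∈ D, DifferentiableAt ℝ F z) (hΦ : ∀ z ∈ D, DifferentiableAt ℝ Φ z)
    (hK : norm0 (x - y) ≤ K) :
    F x + dotp (grad F x) (y - x) + C * (Φ y - Φ x - dotp (grad Φ x) (y - x)) ≤ F y := by
  have hxD : x ∈ D := hseg (left_mem_segment ℝ x y)
  have hsparse : ∀ z ∈ segment ℝ x y, norm0 (x - z) ≤ K := by
    rw [segment_eq_image']
    rintro _ ⟨t, -, rfl⟩
    rw [sub_add_cancel_left, ← smul_neg, neg_sub]
    exact (norm0_smul_le t _).trans hK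
  have htangent := add_fderiv_sub_le_of_forall_segment (f := F - C • Φ)
    (fun z hz => (hF z (hseg hz)).sub ((hΦ z (hseg hz)).const_smul C))
    fun z hz => h.fderiv_sub_smul_monotone hx (hseg hz) (hsparse z hz)
      (hF x hxD) (hF z (hseg hz)) (hΦ x hxD) (hΦ z (hseg hz))
  rw [fderiv_sub (hF x hxD) ((hΦ x hxD).const_smul C), fderiv_const_smul (hΦ x hxD)] at htangent
  simp only [Pi.sub_apply, Pi.smul_apply, sub_apply, smul_apply, smul_eq_mul] at htangent
  rw [dotp_grad, dotp_grad]
  linarith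

end BRSC

section ZeroPadding

variable {N : ℕ} (ω : Finset (Fin N))

/-- The zero padding operator `Z_ω` as a continuous linear map, which makes the chain rule and
preservation of convexity under preimages available for `zpad`. -/
def zpadCLM : ({i // i ∈ ω} → ℝ) →L[ℝ] (Fin N → ℝ) :=
  LinearMap.toContinuousLinearMap
    { toFun := zpad ω
      map_add' := fun u v => by ext i; by_cases hi : i ∈ ω <;> simp [zpad, hi]
      map_smul' := fun c u => by ext i; by_cases hi : i ∈ ω <;> simp [zpad, hi] }

theorem zpad_sub (u v : {i // i ∈ ω} → ℝ) : zpad ω (u - v) = zpad ω u - zpad ω v :=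
  map_sub (zpadCLM ω) u v

theorem zpad_injective : Function.Injective (zpad ω) := fun u v huv => by
  ext ⟨i, hi⟩
  simpa only [zpad, hi, dite_true] using congrFun huv i

theorem norm0_zpad (u : {i // i ∈ ω} → ℝ) : norm0 (zpad ω u) = norm0 u := by
  rw [norm0, norm0, ← Finset.card_map (Function.Embedding.subtype (· ∈ ω))]
  congr 1
  ext i
  by_cases hi : i ∈ ω <;> simp [zpad, hi]

variable {ω} {F Φ : (Fin N → ℝ) → ℝ}

theorem hasFDerivAt_comp_zpad {u : {i // i ∈ ω} → ℝ} (hF : DifferentiableAt ℝ F (zpad ω u)) :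
    HasFDerivAt (F ∘ zpad ω) ((fderiv ℝ F (zpad ω u)).comp (zpadCLM ω)) u :=
  hF.hasFDerivAt.comp u (zpadCLM ω).hasFDerivAt

theorem BRSC.comp_zpad {X D : Set (Fin N → ℝ)} {K : ℕ} {C : ℝ} (h : BRSC F Φ X D K C)
    (hXD : X ⊆ D) (hF : ∀ x ∈ D, DifferentiableAt ℝ F x) (hΦ : ∀ x ∈ D, DifferentiableAt ℝ Φ x) :
    BRSC (F ∘ zpad ω) (Φ ∘ zpad ω) (zpad ω ⁻¹' X) (zpad ω ⁻¹' D) K C := by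
  intro u hu v hv huv hK
  rw [← norm0_zpad, zpad_sub] at hK
  have hpadded := h _ hu _ hv ((zpad_injective ω).ne huv) hK
  rw [dotp_grad_sub_grad, dotp_grad_sub_grad, ← zpad_sub] at hpadded
  rw [dotp_grad_sub_grad, dotp_grad_sub_grad,
    (hasFDerivAt_comp_zpad (hF _ (hXD hu))).fderiv, (hasFDerivAt_comp_zpad (hF _ hv)).fderiv,
    (hasFDerivAt_comp_zpad (hΦ _ (hXD hu))).fderiv, (hasFDerivAt_comp_zpad (hΦ _ hv)).fderiv]
  exact hpadded

end ZeroPadding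

theorem stmt2_general {N : ℕ} {F Φ : (Fin N → ℝ) → ℝ} {X D : Set (Fin N → ℝ)} {K : ℕ} {C : ℝ}
    {ω : Finset (Fin N)} (hBRSC : BRSC F Φ X D K C) (hX : Convex ℝ X) (hD : Convex ℝ D)
    (hXD : X ⊆ D) (hF : ∀ x ∈ D, DifferentiableAt ℝ F x) (hΦ : ∀ x ∈ D, DifferentiableAt ℝ Φ x)
    (hω : ω.card ≤ K) :
    ConvexOn ℝ (zpad ω ⁻¹' X) (F ∘ zpad ω - C • Φ ∘ zpad ω) ∧
    ∀ u ∈ zpad ω ⁻¹' D, ∀ u' ∈ zpad ω ⁻¹' X,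
      F (zpad ω u') + dotp (grad (F ∘ zpad ω) u') (u - u')
          + C * (Φ (zpad ω u) - Φ (zpad ω u') - dotp (grad (Φ ∘ zpad ω) u') (u - u'))
        ≤ F (zpad ω u) := by
  have hBRSCω := hBRSC.comp_zpad (ω := ω) hXD hF hΦ
  have hXω : Convex ℝ (zpad ω ⁻¹' X) := hX.linear_preimage (zpadCLM ω).toLinearMap
  have hDω : Convex ℝ (zpad ω ⁻¹' D) := hD.linear_preimage (zpadCLM ω).toLinearMap
  have hFω : ∀ u ∈ zpad ω ⁻¹' D, DifferentiableAt ℝ (F ∘ zpad ω) u :=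
    fun u hu => (hasFDerivAt_comp_zpad (hF _ hu)).differentiableAt
  have hΦω : ∀ u ∈ zpad ω ⁻¹' D, DifferentiableAt ℝ (Φ ∘ zpad ω) u :=
    fun u hu => (hasFDerivAt_comp_zpad (hΦ _ hu)).differentiableAt
  have hsparse : ∀ w : {i // i ∈ ω} → ℝ, norm0 w ≤ K :=
    fun w => (norm0_le_card w).trans ((Fintype.card_coe ω).trans_le hω)
  exact ⟨hBRSCω.convexOn_sub_smul hXω (Set.preimage_mono hXD) hFω hΦω fun _ _ _ _ => hsparse _,
    fun u hu u' hu' => hBRSCω.add_dotp_grad_le hu' (hDω.segment_subset (hXD hu') hu) hFω hΦω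
      (hsparse _)⟩

/-- restriction of BRSC to a subset `ω` of the variables. -/
theorem stmt2 {N : ℕ} (F Φ : (Fin N → ℝ) → ℝ)
    (hFc : ConvexOn ℝ Set.univ F) (hΦc : ConvexOn ℝ Set.univ Φ)
    (hFd : Differentiable ℝ F) (hΦd : Differentiable ℝ Φ)
    (X : Set (Fin N → ℝ)) (hX : Convex ℝ X) (K : ℕ) (C : ℝ) (hC : 0 < C)
    (hBRSC : BRSC F Φ X Set.univ K C)
    (ω : Finset (Fin N)) (hω : ω.card ≤ K) :
    -- (i) `F_ω - C Φ_ω` is convex on `X_ω`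
    ConvexOn ℝ {u : {i // i ∈ ω} → ℝ | zpad ω u ∈ X}
      (fun u => F (zpad ω u) - C * Φ (zpad ω u)) ∧
    -- (ii) the strengthened gradient inequality holds on `X_ω`
    (∀ u ∈ {u : {i // i ∈ ω} → ℝ | zpad ω u ∈ X},
      ∀ u' ∈ {u : {i // i ∈ ω} → ℝ | zpad ω u ∈ X},
        F (zpad ω u') + dotp (grad (fun v => F (zpad ω v)) u') (u - u')
            + C * (Φ (zpad ω u) - Φ (zpad ω u')
                - dotp (grad (fun v => Φ (zpad ω v)) u') (u - u'))
          ≤ F (zpad ω u)) := by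
  have h := stmt2_general hBRSC hX convex_univ X.subset_univ (fun x _ => hFd x) (fun x _ => hΦd x)
    hω
  exact ⟨h.1, fun u _ => h.2 u trivial⟩
end
end

section
/- Assume F := G_y(A·) satisfies the BRSC property with respect to Ψ, a set X ⊆ C^N, and K, with constant C_K > 0. Let x ∈ X be a critical point of J_Ψ such that for every i = 1,…,N, |z_i(x)| does not belong to the interval [C_K(ψ_i'(α_i) − ψ_i'(0)) + ψ_i'(0), (ψ_i'(α_i) − ψ_i'(0))/C_K + ψ_i'(0)]. Then every critical point x' ∈ C^N of J_Ψ with x' ≠ x satisfies ‖x' − x‖₀ > K. -/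
open Classical

noncomputable section

/-- one-dimensional Bregman divergence `d_ψ(x, x') = ψ(x) - ψ(x') - ψ'(x')(x - x')`,
with the derivative `dψ` of `ψ` given as data. -/
def dBreg (ψ dψ : ℝ → ℝ) (x x' : ℝ) : ℝ := ψ x - ψ x' - dψ x' * (x - x')

/-- The data-fidelity setting of the paper (Assumption 1.3): a separable fidelity term
`G_y(w) = Σ_j g_j(w_j)` where each `g j` is nonnegative, strictly convex, twice
differentiable on the interior of its domain, with an `L`-Lipschitz derivative `dg j`;
a matrix `A`; and the constraint set `𝒞` equal to `ℝ` or `ℝ_{≥0}`. -/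
structure FidSetting (M N : ℕ) where
  𝒞 : Set ℝ
  h𝒞 : 𝒞 = Set.univ ∨ 𝒞 = Set.Ici 0
  A : Matrix (Fin M) (Fin N) ℝ
  domg : Fin M → Set ℝ
  g : Fin M → ℝ → ℝ
  dg : Fin M → ℝ → ℝ
  L : ℝ
  hL : 0 < L
  hdom : ∀ x : Fin N → ℝ, (∀ i, x i ∈ 𝒞) → ∀ j, (A.mulVec x) j ∈ interior (domg j)
  hg_nonneg : ∀ j, ∀ w ∈ domg j, 0 ≤ g j w
  hg_sconv : ∀ j, StrictConvexOn ℝ (domg j) (g j)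
  hg_deriv : ∀ j, ∀ w ∈ interior (domg j), HasDerivAt (g j) (dg j w) w
  hg_deriv2 : ∀ j, ∀ w ∈ interior (domg j), DifferentiableAt ℝ (dg j) w
  hg_lip : ∀ j, ∀ w ∈ domg j, ∀ v ∈ domg j, |dg j w - dg j v| ≤ L * |w - v|

/-- the feasible set `𝒞^N`. -/
def FidSetting.feas {M N : ℕ} (S : FidSetting M N) : Set (Fin N → ℝ) :=
  {x | ∀ i, x i ∈ S.𝒞}

/-- the data term `F(x) = G_y(Ax)`. -/
def FidSetting.F {M N : ℕ} (S : FidSetting M N) (x : Fin N → ℝ) : ℝ :=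
  ∑ j, S.g j (S.A.mulVec x j)

/-- the gradient `∇F(x) = Aᵀ ∇G_y(Ax)`. -/
def FidSetting.gradF {M N : ℕ} (S : FidSetting M N) (x : Fin N → ℝ) : Fin N → ℝ :=
  fun i => ∑ j, S.A j i * S.dg j (S.A.mulVec x j)

/-- the Bregman-generating setting (Definition 3.1 of the paper): `Ψ(x) = Σ_i ψ_i(x_i)`
with each `ψ_i` strictly convex, twice differentiable, `t ↦ ψ_i'(t)t - ψ_i(t)` coercive,
and `ψ_i'` odd when `𝒞 = ℝ` (resp. `ψ_i'(0) ≥ 0` when `𝒞 = ℝ_{≥0}`). -/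
structure PsiSetting (N : ℕ) (𝒞 : Set ℝ) where
  ψ : Fin N → ℝ → ℝ
  dψ : Fin N → ℝ → ℝ
  hconv : ∀ i, StrictConvexOn ℝ 𝒞 (ψ i)
  hderiv : ∀ i, ∀ t ∈ 𝒞, HasDerivWithinAt (ψ i) (dψ i t) 𝒞 t
  hderiv2 : ∀ i, ∀ t ∈ interior 𝒞, DifferentiableAt ℝ (dψ i) t
  hcoer : ∀ i, ∀ c : ℝ, ∃ R : ℝ, ∀ t ∈ 𝒞, R ≤ |t| → c ≤ dψ i t * t - ψ i t
  hodd : 𝒞 = Set.univ → ∀ i t, dψ i (-t) = -(dψ i t)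
  hnn : 𝒞 = Set.Ici 0 → ∀ i, 0 ≤ dψ i 0

/-- `∇Ψ(x)`. -/
def PsiSetting.gradPsi {N : ℕ} {𝒞 : Set ℝ} (P : PsiSetting N 𝒞) (x : Fin N → ℝ) :
    Fin N → ℝ :=
  fun i => P.dψ i (x i)

/-- the scalar B-rex penalty `β_{ψ_i}`. -/
def betaPen {N : ℕ} {𝒞 : Set ℝ} (P : PsiSetting N 𝒞) (α : Fin N → ℝ) (lam0 : ℝ)
    (i : Fin N) (t : ℝ) : ℝ :=
  if |t| ≤ α i then P.ψ i 0 - P.ψ i t + Real.sign t * P.dψ i (α i) * t else lam0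

/-- the relaxed objective `J_Ψ(x) = G_y(Ax) + B_Ψ(x)`. -/
def JPsi {M N : ℕ} (S : FidSetting M N) (P : PsiSetting N S.𝒞) (α : Fin N → ℝ) (lam0 : ℝ)
    (x : Fin N → ℝ) : ℝ :=
  S.F x + ∑ i, betaPen P α lam0 i (x i)

/-- the `ℓ₀`-regularized objective `J₀(x) = G_y(Ax) + λ₀‖x‖₀`. -/
def J0 {M N : ℕ} (S : FidSetting M N) (lam0 : ℝ) (x : Fin N → ℝ) : ℝ :=
  S.F x + lam0 * (norm0 x : ℝ)

/-- the subdifferential `∂h_i` of `h_i = β_{ψ_i} + ψ_i` (closed form). -/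
def subdiffH (𝒞 : Set ℝ) (dψ : ℝ → ℝ) (α : ℝ) (t : ℝ) : Set ℝ :=
  if 𝒞 = Set.univ then
    if t = 0 then Set.Icc (-(dψ α)) (dψ α)
    else if |t| ≤ α then {Real.sign t * dψ α}
    else {dψ t}
  else
    if t ≤ α then {dψ α} else {dψ t}

/-- `z(x) = ∇Ψ(x) - Aᵀ∇G_y(Ax)`. -/
def zmap {M N : ℕ} (S : FidSetting M N) (P : PsiSetting N S.𝒞) (x : Fin N → ℝ) :
    Fin N → ℝ :=
  fun i => P.dψ i (x i) - S.gradF x i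

/-- `x ∈ 𝒞^N` is a critical point of `J_Ψ` iff `z_i(x) ∈ ∂h_i(x_i)` for every `i`. -/
def IsCritical {M N : ℕ} (S : FidSetting M N) (P : PsiSetting N S.𝒞) (α : Fin N → ℝ)
    (x : Fin N → ℝ) : Prop :=
  x ∈ S.feas ∧ ∀ i, zmap S P x i ∈ subdiffH S.𝒞 (P.dψ i) (α i) (x i)

/-- `F = G_y(A·)` satisfies BRSC with respect to `Ψ`, `X`, `K`, with constant `CK`. -/
def BRSCholds {M N : ℕ} (S : FidSetting M N) (P : PsiSetting N S.𝒞)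
    (X : Set (Fin N → ℝ)) (K : ℕ) (CK : ℝ) : Prop :=
  ∀ x ∈ X, ∀ x' ∈ S.feas, x ≠ x' → norm0 (x - x') ≤ K →
    CK * dotp (P.gradPsi x - P.gradPsi x') (x - x')
      ≤ dotp (S.gradF x - S.gradF x') (x - x')

/-!
Put `f = ψ_i'`, `p = f α_i`, `b = f 0`. At `t > 0` the set `∂h_i(t)` is the singleton
`{max p (f t)}`, and on `ℝ` it is odd in `t`; hence `∂h_i` is monotone. The heart of the matter is
scalar: for `z ∈ ∂h_i(t)`, `w ∈ ∂h_i(s)` and `s ≠ t`, one has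
`(1 - C) (f t - f s) (t - s) < (z - w) (t - s)` as soon as `|z|` avoids the critical interval.
If `C > 1` this is monotonicity. If `C ≤ 1`, avoiding the interval forces either `t > 0` and
`z = f t` with `p - b < C (f t - b)`, or `t = 0` with `|z| < C p`, or the mirror image of the first
alternative. Summing over the coordinates gives
`(1 - C) ⟨∇Ψ(x) - ∇Ψ(x'), x - x'⟩ < ⟨z(x) - z(x'), x - x'⟩`, and since `z = ∇Ψ - ∇F` this negates
the restricted strong convexity inequality between `x` and `x'`.
-/

/-- The properties of the derivative `f = ψ'` of a Bregman generator `ψ` on `𝒞` that the argument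
relies on: `𝒞` is `ℝ` or `ℝ_{≥0}`, and `f` is strictly increasing, odd on `ℝ`, nonnegative at the
origin on `ℝ_{≥0}`. -/
structure IsGeneratorDeriv (𝒞 : Set ℝ) (f : ℝ → ℝ) : Prop where
  eq_univ_or_eq_Ici : 𝒞 = Set.univ ∨ 𝒞 = Set.Ici 0
  strictMonoOn : StrictMonoOn f 𝒞
  odd : 𝒞 = Set.univ → f.Odd
  nonneg_zero : 𝒞 = Set.Ici 0 → 0 ≤ f 0

/-- The interval of values of `|z_i|` to be avoided by a critical point, for `f = ψ_i'` and the BRSC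
constant `C`. It is empty when `C > 1`, provided `f 0 < f α`. -/
def criticalInterval (f : ℝ → ℝ) (α C : ℝ) : Set ℝ :=
  Set.Icc (C * (f α - f 0) + f 0) ((f α - f 0) / C + f 0)

theorem strictMonoOn_deriv_of_strictConvexOn {D : Set ℝ} {f f' : ℝ → ℝ} (hf : StrictConvexOn ℝ D f)
    (hf' : ∀ t ∈ D, HasDerivWithinAt f (f' t) D t) : StrictMonoOn f' D := fun s hs t ht hst =>
  (hf.lt_slope_of_hasDerivWithinAt hs ht hst (hf' s hs)).trans
    (hf.slope_lt_of_hasDerivWithinAt hs ht hst (hf' t ht))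

theorem PsiSetting.isGeneratorDeriv {N : ℕ} {𝒞 : Set ℝ} (P : PsiSetting N 𝒞)
    (h𝒞 : 𝒞 = Set.univ ∨ 𝒞 = Set.Ici 0) (i : Fin N) : IsGeneratorDeriv 𝒞 (P.dψ i) where
  eq_univ_or_eq_Ici := h𝒞
  strictMonoOn := strictMonoOn_deriv_of_strictConvexOn (P.hconv i) (P.hderiv i)
  odd h := P.hodd h i
  nonneg_zero h := P.hnn h i

section Subdifferential

variable {𝒞 : Set ℝ} {f : ℝ → ℝ} {α t z : ℝ}

theorem subdiffH_eq_singleton_max (hf : MonotoneOn f (Set.Ici 0)) (hα : 0 ≤ α) (ht : 0 ≤ t)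
    (ht0 : 𝒞 = Set.univ → t ≠ 0) : subdiffH 𝒞 f α t = {max (f α) (f t)} := by
  have hbranches : subdiffH 𝒞 f α t = if t ≤ α then {f α} else {f t} := by
    by_cases h : 𝒞 = Set.univ
    · have hsign : Real.sign t = 1 := Real.sign_of_pos (ht.lt_of_ne' (ht0 h))
      simp only [subdiffH, h, if_true, ht0 h, if_false, abs_of_nonneg ht, hsign, one_mul]
    · simp only [subdiffH, h, if_false]
  rw [hbranches]
  split_ifs with htα
  · rw [max_eq_left (hf ht hα htα)]
  · have hαt : α ≤ t := (not_le.mp htα).le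
    rw [max_eq_right (hf hα ht hαt)]

theorem subdiffH_univ_zero : subdiffH Set.univ f α 0 = Set.Icc (-f α) (f α) := by
  simp [subdiffH]

theorem neg_mem_subdiffH_univ (hf : f.Odd) (hz : z ∈ subdiffH Set.univ f α t) :
    -z ∈ subdiffH Set.univ f α (-t) := by
  simp only [subdiffH, if_true, neg_eq_zero, abs_neg] at hz ⊢
  split_ifs at hz ⊢ with h0 hα
  · exact ⟨neg_le_neg hz.2, neg_le.mp hz.1⟩
  · rw [Set.mem_singleton_iff.mp hz, Real.sign_neg, neg_mul, Set.mem_singleton_iff]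
  · rw [Set.mem_singleton_iff.mp hz, hf, Set.mem_singleton_iff]

theorem le_max_of_mem_subdiffH (hf : MonotoneOn f (Set.Ici 0)) (hα : 0 ≤ α) (ht : 0 ≤ t)
    (hz : z ∈ subdiffH 𝒞 f α t) : z ≤ max (f α) (f t) := by
  by_cases h : 𝒞 = Set.univ ∧ t = 0
  · obtain ⟨rfl, rfl⟩ := h
    rw [subdiffH_univ_zero] at hz
    exact le_max_of_le_left hz.2
  · rw [subdiffH_eq_singleton_max hf hα ht fun h𝒞 ht0 => h ⟨h𝒞, ht0⟩] at hz
    exact hz.le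

end Subdifferential

namespace IsGeneratorDeriv

variable {𝒞 : Set ℝ} {f : ℝ → ℝ} {α C s t z w : ℝ}

theorem strictMonoOn_Ici (hf : IsGeneratorDeriv 𝒞 f) : StrictMonoOn f (Set.Ici 0) := by
  refine hf.strictMonoOn.mono ?_
  rcases hf.eq_univ_or_eq_Ici with rfl | rfl
  · exact Set.subset_univ _
  · exact subset_rfl

theorem map_zero_nonneg (hf : IsGeneratorDeriv 𝒞 f) : 0 ≤ f 0 := by
  rcases hf.eq_univ_or_eq_Ici with h | h
  · exact (hf.odd h).map_zero.ge
  · exact hf.nonneg_zero h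

theorem eq_univ_of_neg (hf : IsGeneratorDeriv 𝒞 f) (ht : t ∈ 𝒞) (htneg : t < 0) :
    𝒞 = Set.univ :=
  hf.eq_univ_or_eq_Ici.resolve_right fun h => htneg.not_ge (h ▸ ht :)

theorem eq_max_of_pos (hf : IsGeneratorDeriv 𝒞 f) (hα : 0 < α) (ht : 0 < t)
    (hz : z ∈ subdiffH 𝒞 f α t) : z = max (f α) (f t) := by
  rwa [subdiffH_eq_singleton_max hf.strictMonoOn_Ici.monotoneOn hα.le ht.le fun _ => ht.ne'] at hz

theorem le_of_neg (hf : IsGeneratorDeriv 𝒞 f) (hα : 0 < α) (ht : t ∈ 𝒞) (htneg : t < 0)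
    (hz : z ∈ subdiffH 𝒞 f α t) : z ≤ f t := by
  obtain rfl := hf.eq_univ_of_neg ht htneg
  have hodd := hf.odd rfl
  have hmax := hf.eq_max_of_pos hα (neg_pos.mpr htneg) (neg_mem_subdiffH_univ hodd hz)
  rw [← neg_le_neg_iff, hmax, ← hodd t]
  exact le_max_right _ _

theorem le_of_lt_of_pos (hf : IsGeneratorDeriv 𝒞 f) (hα : 0 < α) (hs : s ∈ 𝒞) (ht : t ∈ 𝒞)
    (hst : s < t) (htpos : 0 < t) (hw : w ∈ subdiffH 𝒞 f α s) (hz : z ∈ subdiffH 𝒞 f α t) :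
    w ≤ z := by
  have hfst := (hf.strictMonoOn hs ht hst).le
  rw [hf.eq_max_of_pos hα htpos hz]
  rcases lt_or_ge s 0 with hs0 | hs0
  · exact ((hf.le_of_neg hα hs hs0 hw).trans hfst).trans (le_max_right _ _)
  · exact (le_max_of_mem_subdiffH hf.strictMonoOn_Ici.monotoneOn hα.le hs0 hw).trans
      (max_le_max_left _ hfst)

theorem le_of_mem_subdiffH_of_lt (hf : IsGeneratorDeriv 𝒞 f) (hα : 0 < α) (hs : s ∈ 𝒞)
    (ht : t ∈ 𝒞) (hst : s < t) (hw : w ∈ subdiffH 𝒞 f α s) (hz : z ∈ subdiffH 𝒞 f α t) :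
    w ≤ z := by
  rcases lt_or_ge 0 t with htpos | ht0
  · exact hf.le_of_lt_of_pos hα hs ht hst htpos hw hz
  · obtain rfl := hf.eq_univ_of_neg hs (hst.trans_le ht0)
    have hodd := hf.odd rfl
    exact neg_le_neg_iff.mp <| hf.le_of_lt_of_pos hα trivial trivial (neg_lt_neg hst)
      (neg_pos.mpr (hst.trans_le ht0)) (neg_mem_subdiffH_univ hodd hz)
      (neg_mem_subdiffH_univ hodd hw)

theorem one_sub_mul_lt_of_one_lt (hf : IsGeneratorDeriv 𝒞 f) (hα : 0 < α) (hC : 1 < C)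
    (hs : s ∈ 𝒞) (ht : t ∈ 𝒞) (hst : s ≠ t)
    (hw : w ∈ subdiffH 𝒞 f α s) (hz : z ∈ subdiffH 𝒞 f α t) :
    (1 - C) * (f t - f s) * (t - s) < (z - w) * (t - s) := by
  have hC' : 1 - C < 0 := sub_neg.mpr hC
  rcases hst.lt_or_gt with h | h
  · have hwz := hf.le_of_mem_subdiffH_of_lt hα hs ht h hw hz
    refine mul_lt_mul_of_pos_right ?_ (sub_pos.mpr h)
    exact (mul_neg_of_neg_of_pos hC' (sub_pos.mpr (hf.strictMonoOn hs ht h))).trans_le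
      (sub_nonneg.mpr hwz)
  · have hzw := hf.le_of_mem_subdiffH_of_lt hα ht hs h hz hw
    refine mul_lt_mul_of_neg_right ?_ (sub_neg.mpr h)
    exact (sub_nonpos.mpr hzw).trans_lt
      (mul_pos_of_neg_of_neg hC' (sub_neg.mpr (hf.strictMonoOn ht hs h)))

theorem eq_and_lt_of_eq_max (hf : IsGeneratorDeriv 𝒞 f) (hα : 0 < α) (hC : 0 < C) (hC1 : C ≤ 1)
    (hzmax : z = max (f α) (f t))
    (hz : |z| ∉ criticalInterval f α C) :
    z = f t ∧ f α - f 0 < C * (f t - f 0) := by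
  have hgap : 0 < f α - f 0 :=
    sub_pos.mpr (hf.strictMonoOn_Ici Set.self_mem_Ici hα.le hα)
  have hαz : f α ≤ z := hzmax ▸ le_max_left _ _
  have hz0 : 0 ≤ z := by linarith [hf.map_zero_nonneg]
  rw [abs_of_nonneg hz0] at hz
  have hlower : C * (f α - f 0) + f 0 ≤ z := by
    linarith [mul_le_of_le_one_left hgap.le hC1]
  have hupper : (f α - f 0) / C + f 0 < z := not_le.mp fun h => hz ⟨hlower, h⟩
  have hαlt : f α < z := by linarith [le_div_self hgap.le hC hC1]
  obtain rfl : z = f t := by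
    rcases max_choice (f α) (f t) with h | h
    · exact absurd (hzmax.trans h) hαlt.ne'
    · exact hzmax.trans h
  exact ⟨rfl, by rw [mul_comm, ← div_lt_iff₀ hC]; linarith⟩

theorem one_sub_mul_lt_of_eq_max (hf : IsGeneratorDeriv 𝒞 f) (hα : 0 < α) (hC : 0 < C)
    (hC1 : C ≤ 1) (hs : s ∈ 𝒞) (ht : t ∈ 𝒞) (hst : s ≠ t) (ht0 : 0 ≤ t)
    (hzmax : z = max (f α) (f t)) (hw : w ∈ subdiffH 𝒞 f α s)
    (hz : |z| ∉ criticalInterval f α C) :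
    (1 - C) * (f t - f s) * (t - s) < (z - w) * (t - s) := by
  obtain ⟨rfl, hout⟩ := hf.eq_and_lt_of_eq_max hα hC hC1 hzmax hz
  rcases hst.lt_or_gt with h | h
  · have hfst : 0 < C * (f t - f s) := mul_pos hC (sub_pos.mpr (hf.strictMonoOn hs ht h))
    suffices w - f s < C * (f t - f s) from
      mul_lt_mul_of_pos_right (by linarith) (sub_pos.mpr h)
    rcases lt_or_ge s 0 with hs0 | hs0
    · linarith [hf.le_of_neg hα hs hs0 hw]
    rcases le_max_iff.mp (le_max_of_mem_subdiffH hf.strictMonoOn_Ici.monotoneOn hα.le hs0 hw)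
      with hwα | hws
    · have hfs : (1 - C) * f 0 ≤ (1 - C) * f s := mul_le_mul_of_nonneg_left
        (hf.strictMonoOn_Ici.monotoneOn Set.self_mem_Ici hs0 hs0) (sub_nonneg.mpr hC1)
      linarith
    · linarith
  · have hfts : 0 < C * (f s - f t) := mul_pos hC (sub_pos.mpr (hf.strictMonoOn ht hs h))
    have hws : f s ≤ w := hf.eq_max_of_pos hα (ht0.trans_lt h) hw ▸ le_max_right _ _
    exact mul_lt_mul_of_neg_right (by linarith) (sub_neg.mpr h)

theorem abs_lt_of_mem_subdiffH_zero (hf : IsGeneratorDeriv Set.univ f) (hα : 0 < α) (hC : 0 < C)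
    (hC1 : C ≤ 1) (hz : z ∈ subdiffH Set.univ f α 0)
    (hzI : |z| ∉ criticalInterval f α C) :
    |z| < C * f α := by
  have hf0 : f 0 = 0 := (hf.odd rfl).map_zero
  have hfα : 0 < f α := hf0 ▸ hf.strictMonoOn trivial trivial hα
  rw [subdiffH_univ_zero] at hz
  simp only [criticalInterval, hf0, sub_zero, add_zero] at hzI
  exact not_le.mp fun h => hzI ⟨h, (abs_le.mpr hz).trans (le_div_self hfα.le hC hC1)⟩

theorem one_sub_mul_lt_sub_of_pos (hf : IsGeneratorDeriv 𝒞 f) (hα : 0 < α) (hC : 0 < C)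
    (hC1 : C ≤ 1) (hs : 0 < s) (hw : w ∈ subdiffH 𝒞 f α s) (hz : z < C * f α) :
    (1 - C) * f s < w - z := by
  have hwmax := hf.eq_max_of_pos hα hs hw
  have hαw : C * f α ≤ C * w := mul_le_mul_of_nonneg_left (hwmax ▸ le_max_left _ _) hC.le
  have hsw : (1 - C) * f s ≤ (1 - C) * w :=
    mul_le_mul_of_nonneg_left (hwmax ▸ le_max_right _ _) (sub_nonneg.mpr hC1)
  linarith

theorem one_sub_mul_lt_of_zero (hf : IsGeneratorDeriv Set.univ f) (hα : 0 < α) (hC : 0 < C)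
    (hC1 : C ≤ 1) (hs : s ≠ 0) (hw : w ∈ subdiffH Set.univ f α s) (hz : |z| < C * f α) :
    (1 - C) * (f 0 - f s) * (0 - s) < (z - w) * (0 - s) := by
  have hodd := hf.odd rfl
  obtain ⟨hz_lower, hz_upper⟩ := abs_lt.mp hz
  rw [hodd.map_zero]
  rcases hs.lt_or_gt with hs0 | hs0
  · have h := hf.one_sub_mul_lt_sub_of_pos hα hC hC1 (neg_pos.mpr hs0)
      (neg_mem_subdiffH_univ hodd hw) (neg_lt.mp hz_lower)
    rw [hodd] at h
    exact mul_lt_mul_of_pos_right (by linarith) (sub_pos.mpr hs0)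
  · have h := hf.one_sub_mul_lt_sub_of_pos hα hC hC1 hs0 hw hz_upper
    exact mul_lt_mul_of_neg_right (by linarith) (sub_neg.mpr hs0)

theorem one_sub_mul_lt_of_notMem_criticalInterval (hf : IsGeneratorDeriv 𝒞 f) (hα : 0 < α)
    (hC : 0 < C) (hs : s ∈ 𝒞) (ht : t ∈ 𝒞) (hst : s ≠ t)
    (hw : w ∈ subdiffH 𝒞 f α s) (hz : z ∈ subdiffH 𝒞 f α t)
    (hzI : |z| ∉ criticalInterval f α C) :
    (1 - C) * (f t - f s) * (t - s) < (z - w) * (t - s) := by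
  rcases lt_or_ge 1 C with hC1 | hC1
  · exact hf.one_sub_mul_lt_of_one_lt hα hC1 hs ht hst hw hz
  rcases hf.eq_univ_or_eq_Ici with rfl | rfl
  · have hodd := hf.odd rfl
    rcases lt_trichotomy t 0 with ht0 | rfl | ht0
    · have h := hf.one_sub_mul_lt_of_eq_max hα hC hC1 (Set.mem_univ (-s)) (Set.mem_univ (-t))
        (neg_injective.ne hst) (neg_pos.mpr ht0).le
        (hf.eq_max_of_pos hα (neg_pos.mpr ht0) (neg_mem_subdiffH_univ hodd hz))
        (neg_mem_subdiffH_univ hodd hw) (by rwa [abs_neg])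
      rw [hodd, hodd] at h
      linarith
    · exact hf.one_sub_mul_lt_of_zero hα hC hC1 hst hw
        (hf.abs_lt_of_mem_subdiffH_zero hα hC hC1 hz hzI)
    · exact hf.one_sub_mul_lt_of_eq_max hα hC hC1 hs ht hst ht0.le (hf.eq_max_of_pos hα ht0 hz)
        hw hzI
  · have hne : Set.Ici (0 : ℝ) ≠ Set.univ := fun h => not_bddBelow_univ (h ▸ bddBelow_Ici)
    rw [subdiffH_eq_singleton_max hf.strictMonoOn.monotoneOn hα.le ht (absurd · hne)] at hz
    exact hf.one_sub_mul_lt_of_eq_max hα hC hC1 hs ht hst ht hz hw hzI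

end IsGeneratorDeriv

section Vector

variable {ι : Type*} [Fintype ι]

theorem norm0_sub_comm (x y : ι → ℝ) : norm0 (x - y) = norm0 (y - x) := by
  simp only [norm0, Pi.sub_apply, sub_ne_zero, ne_comm]

theorem dotp_lt_dotp {u v h : ι → ℝ} (hh : h ≠ 0)
    (huv : ∀ i, h i ≠ 0 → u i * h i < v i * h i) : dotp u h < dotp v h := by
  obtain ⟨k, hk⟩ := Function.ne_iff.mp hh
  refine Finset.sum_lt_sum (fun i _ => ?_) ⟨k, Finset.mem_univ k, huv k hk⟩
  by_cases hi : h i = 0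
  · simp only [hi, mul_zero, le_refl]
  · exact (huv i hi).le

theorem dotp_smul_sub_sub_dotp (C : ℝ) (u v h : ι → ℝ) :
    dotp ((1 - C) • u) h - dotp (u - v) h = dotp v h - C * dotp u h := by
  change (1 - C) • u ⬝ᵥ h - (u - v) ⬝ᵥ h = v ⬝ᵥ h - C * u ⬝ᵥ h
  rw [smul_dotProduct, sub_dotProduct, smul_eq_mul]
  ring

/-- `Pi.map f` is `∇Ψ`, and an arbitrary vector field `G` takes the place of `∇F`. -/
theorem stmt8_general {𝒞 : Set ℝ} {f : ι → ℝ → ℝ} (hf : ∀ i, IsGeneratorDeriv 𝒞 (f i))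
    {α : ι → ℝ} (hα : ∀ i, 0 < α i) {G : (ι → ℝ) → ι → ℝ} {K : ℕ} {C : ℝ} (hC : 0 < C)
    {x : ι → ℝ} (hx : ∀ i, x i ∈ 𝒞)
    (hBRSC : ∀ x' : ι → ℝ, (∀ i, x' i ∈ 𝒞) → x ≠ x' → norm0 (x - x') ≤ K →
      C * dotp (Pi.map f x - Pi.map f x') (x - x') ≤ dotp (G x - G x') (x - x'))
    (hxcrit : ∀ i, f i (x i) - G x i ∈ subdiffH 𝒞 (f i) (α i) (x i))
    (hz : ∀ i, |f i (x i) - G x i| ∉ criticalInterval (f i) (α i) C)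
    {x' : ι → ℝ} (hx' : ∀ i, x' i ∈ 𝒞)
    (hxcrit' : ∀ i, f i (x' i) - G x' i ∈ subdiffH 𝒞 (f i) (α i) (x' i)) (hne : x' ≠ x) :
    K < norm0 (x' - x) := by
  by_contra! hK
  have hconvex := hBRSC x' hx' hne.symm (norm0_sub_comm x x' ▸ hK)
  have hlt : dotp ((1 - C) • (Pi.map f x - Pi.map f x')) (x - x') <
      dotp ((Pi.map f x - Pi.map f x') - (G x - G x')) (x - x') := by
    refine dotp_lt_dotp (sub_ne_zero.mpr hne.symm) fun i hi => ?_
    rw [sub_sub_sub_comm]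
    exact (hf i).one_sub_mul_lt_of_notMem_criticalInterval (hα i) hC (hx' i) (hx i)
      (sub_ne_zero.mp hi).symm (hxcrit' i) (hxcrit i) (hz i)
  linarith [dotp_smul_sub_sub_dotp C (Pi.map f x - Pi.map f x') (G x - G x') (x - x')]

end Vector

/-- Theorem 4.1 of the paper: a critical point whose `z` avoids the
critical interval is isolated in terms of sparsity. -/
theorem stmt8 {M N : ℕ} (S : FidSetting M N) (P : PsiSetting N S.𝒞)
    (lam0 : ℝ) (hlam0 : 0 < lam0) (α : Fin N → ℝ)
    (hα : ∀ i, 0 < α i ∧ dBreg (P.ψ i) (P.dψ i) 0 (α i) = lam0)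
    (X : Set (Fin N → ℝ)) (hXfeas : X ⊆ S.feas) (K : ℕ) (CK : ℝ) (hCK : 0 < CK)
    (hBRSC : BRSCholds S P X K CK)
    (x : Fin N → ℝ) (hxX : x ∈ X) (hxcrit : IsCritical S P α x)
    (hz : ∀ i, |zmap S P x i| ∉
      Set.Icc (CK * (P.dψ i (α i) - P.dψ i 0) + P.dψ i 0)
              ((P.dψ i (α i) - P.dψ i 0) / CK + P.dψ i 0)) :
    ∀ x' : Fin N → ℝ, IsCritical S P α x' → x' ≠ x → K < norm0 (x' - x) :=
  fun _ hx' hne => stmt8_general (P.isGeneratorDeriv S.h𝒞) (fun i => (hα i).1) hCK hxcrit.1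
    (hBRSC x hxX) hxcrit.2 hz hx'.1 hx'.2 hne
end
end

section
/- Assume F := G_y(A·) satisfies the BRSC property with respect to Ψ, a set X ⊆ C^N, and K, with constant C_K > 1. Then J_Ψ admits at most one critical point x ∈ X with ‖x‖₀ ≤ K/2: if x and x̃ are critical points of J_Ψ lying in X with 2‖x‖₀ ≤ K and 2‖x̃‖₀ ≤ K, then x = x̃. -/
open Classical

noncomputable section

/-!
Write `D_Ψ = ⟨∇Ψ(x) - ∇Ψ(x'), x - x'⟩` and `D_F = ⟨∇F(x) - ∇F(x'), x - x'⟩`. Since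
`z = ∇Ψ - ∇F`, we have `⟨z(x) - z(x'), x - x'⟩ = D_Ψ - D_F`. If `x` and `x'` are critical points,
then `z_i(x) ∈ ∂h_i(x_i)` and `z_i(x') ∈ ∂h_i(x'_i)`. The maps `∂h_i` are monotone: for `t > 0`
the only element of `∂h_i(t)` is `ψ_i'(max α_i t)`, and `∂h_i` is odd when `C = ℝ`. Hence
`D_F ≤ D_Ψ`. If moreover `x ≠ x'`, then `D_Ψ > 0` by strict convexity and BRSC gives
`C_K * D_Ψ ≤ D_F ≤ D_Ψ`, contradicting `C_K > 1`.
-/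

/-- Monotonicity on `s`, in the sense of Minty, of a set-valued map `T` on the real line, as
satisfied by the subdifferential of a convex function. On the line the usual condition
`0 ≤ (u - v) * (a - b)` is equivalent to the order form used here. -/
def MonotoneOperatorOn (T : ℝ → Set ℝ) (s : Set ℝ) : Prop :=
  ∀ ⦃a⦄, a ∈ s → ∀ ⦃b⦄, b ∈ s → a < b → ∀ u ∈ T a, ∀ v ∈ T b, u ≤ v

lemma MonotoneOperatorOn.mul_sub_nonneg {T : ℝ → Set ℝ} {s : Set ℝ} (hT : MonotoneOperatorOn T s)
    {a b u v : ℝ} (ha : a ∈ s) (hb : b ∈ s) (hu : u ∈ T a) (hv : v ∈ T b) :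
    0 ≤ (u - v) * (a - b) := by
  rcases lt_trichotomy a b with hab | rfl | hba
  · exact mul_nonneg_of_nonpos_of_nonpos (sub_nonpos.2 (hT ha hb hab u hu v hv))
      (sub_nonpos.2 hab.le)
  · simp
  · exact mul_nonneg (sub_nonneg.2 (hT hb ha hba v hv u hu)) (sub_nonneg.2 hba.le)

lemma strictMonoOn_of_strictConvexOn_of_hasDerivWithinAt {f f' : ℝ → ℝ} {s : Set ℝ}
    (hf : StrictConvexOn ℝ s f) (hf' : ∀ t ∈ s, HasDerivWithinAt f (f' t) s t) :
    StrictMonoOn f' s := fun a ha b hb hab =>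
  (hf.lt_slope_of_hasDerivWithinAt ha hb hab (hf' a ha)).trans
    (hf.slope_lt_of_hasDerivWithinAt ha hb hab (hf' b hb))

section Vector

variable {ι : Type*} [Fintype ι]

lemma norm0_eq_hammingNorm (x : ι → ℝ) : norm0 x = hammingNorm x := by
  unfold norm0 hammingNorm
  congr

lemma norm0_sub_le (x y : ι → ℝ) : norm0 (x - y) ≤ norm0 x + norm0 y := by
  have h := hammingDist_triangle y 0 x
  rw [hammingDist_zero_right, hammingDist_zero_left, hammingDist_eq_hammingNorm,
    neg_add_eq_sub, add_comm] at h
  simpa only [norm0_eq_hammingNorm] using h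

lemma dotp_sub_left (x y z : ι → ℝ) : dotp (x - y) z = dotp x z - dotp y z :=
  sub_dotProduct x y z

lemma dotp_sub_sub_nonneg {T : ι → ℝ → Set ℝ} {s : ι → Set ℝ}
    (hT : ∀ i, MonotoneOperatorOn (T i) (s i)) {x y u v : ι → ℝ}
    (hx : ∀ i, x i ∈ s i) (hy : ∀ i, y i ∈ s i)
    (hu : ∀ i, u i ∈ T i (x i)) (hv : ∀ i, v i ∈ T i (y i)) :
    0 ≤ dotp (u - v) (x - y) :=
  Finset.sum_nonneg fun i _ => (hT i).mul_sub_nonneg (hx i) (hy i) (hu i) (hv i)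

lemma dotp_sub_sub_pos {f : ι → ℝ → ℝ} {s : ι → Set ℝ} (hf : ∀ i, StrictMonoOn (f i) (s i))
    {x y : ι → ℝ} (hx : ∀ i, x i ∈ s i) (hy : ∀ i, y i ∈ s i) (hxy : x ≠ y) :
    0 < dotp ((fun i => f i (x i)) - fun i => f i (y i)) (x - y) := by
  have pos_of_ne (i : ι) (hi : x i ≠ y i) : 0 < (f i (x i) - f i (y i)) * (x i - y i) := by
    rcases hi.lt_or_gt with hlt | hgt
    · exact mul_pos_of_neg_of_neg (sub_neg.2 (hf i (hx i) (hy i) hlt)) (sub_neg.2 hlt)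
    · exact mul_pos (sub_pos.2 (hf i (hy i) (hx i) hgt)) (sub_pos.2 hgt)
  obtain ⟨k, hk⟩ := Function.ne_iff.1 hxy
  refine Finset.sum_pos' (fun i _ => ?_) ⟨k, Finset.mem_univ k, pos_of_ne k hk⟩
  by_cases hi : x i = y i
  · simp [hi]
  · exact (pos_of_ne i hi).le

end Vector

section Subdifferential

variable {d : ℝ → ℝ} {α t u : ℝ}

lemma subdiffH_of_ne_univ {𝒞 : Set ℝ} (h𝒞 : 𝒞 ≠ Set.univ) :
    subdiffH 𝒞 d α t = {d (max α t)} := by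
  rw [subdiffH, if_neg h𝒞]
  split_ifs with h
  · rw [max_eq_left h]
  · rw [max_eq_right (not_le.1 h).le]

lemma subdiffH_univ_of_pos (ht : 0 < t) :
    subdiffH Set.univ d α t = {d (max α t)} := by
  rw [subdiffH, if_pos rfl, if_neg ht.ne', abs_of_pos ht, Real.sign_of_pos ht, one_mul]
  split_ifs with h
  · rw [max_eq_left h]
  · rw [max_eq_right (not_le.1 h).le]

lemma neg_mem_subdiffH_univ_neg (hodd : Function.Odd d) (hu : u ∈ subdiffH Set.univ d α t) :
    -u ∈ subdiffH Set.univ d α (-t) := by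
  simp only [subdiffH, if_true, neg_eq_zero, abs_neg, Real.sign_neg, hodd t] at hu ⊢
  split_ifs at hu ⊢
  · exact ⟨neg_le_neg hu.2, neg_le.2 hu.1⟩
  · simpa using hu
  · simpa using hu

lemma le_of_mem_subdiffH_univ (hd : Monotone d) (hodd : Function.Odd d) (hα : 0 ≤ α)
    (hu : u ∈ subdiffH Set.univ d α t) : u ≤ d (max α t) := by
  rcases lt_trichotomy t 0 with ht | rfl | ht
  · rw [max_eq_left (ht.le.trans hα)]
    simp only [subdiffH, if_true, if_neg ht.ne, Real.sign_of_neg ht, neg_one_mul, ← hodd α] at hu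
    split_ifs at hu
    · exact hu.le.trans (hd (neg_le_self hα))
    · exact hu.le.trans (hd (ht.le.trans hα))
  · rw [max_eq_left hα]
    simp only [subdiffH, if_true] at hu
    exact hu.2
  · rw [subdiffH_univ_of_pos ht] at hu
    exact hu.le

lemma monotoneOperatorOn_subdiffH_univ (hd : Monotone d) (hodd : Function.Odd d) (hα : 0 ≤ α) :
    MonotoneOperatorOn (subdiffH Set.univ d α) Set.univ := by
  have le_of_pos {a b u v : ℝ} (hab : a < b) (hb : 0 < b) (hu : u ∈ subdiffH Set.univ d α a)
      (hv : v ∈ subdiffH Set.univ d α b) : u ≤ v := by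
    rw [subdiffH_univ_of_pos hb] at hv
    calc u ≤ d (max α a) := le_of_mem_subdiffH_univ hd hodd hα hu
      _ ≤ d (max α b) := hd (max_le_max_left α hab.le)
      _ = v := hv.symm
  intro a _ b _ hab u hu v hv
  rcases lt_or_ge 0 b with hb | hb
  · exact le_of_pos hab hb hu hv
  · exact neg_le_neg_iff.1 <| le_of_pos (neg_lt_neg hab) (neg_pos.2 (hab.trans_le hb))
      (neg_mem_subdiffH_univ_neg hodd hv) (neg_mem_subdiffH_univ_neg hodd hu)

lemma monotoneOperatorOn_subdiffH_of_ne_univ {𝒞 : Set ℝ} (h𝒞 : 𝒞 ≠ Set.univ)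
    (hd : MonotoneOn d 𝒞) (hα : α ∈ 𝒞) : MonotoneOperatorOn (subdiffH 𝒞 d α) 𝒞 := by
  have max_mem {t : ℝ} (ht : t ∈ 𝒞) : max α t ∈ 𝒞 := max_rec' (· ∈ 𝒞) hα ht
  intro a ha b hb hab u hu v hv
  rw [subdiffH_of_ne_univ h𝒞] at hu hv
  rw [hu, hv]
  exact hd (max_mem ha) (max_mem hb) (max_le_max_left α hab.le)

end Subdifferential

section CriticalPoint

variable {M N : ℕ}

lemma PsiSetting.strictMonoOn_dψ {𝒞 : Set ℝ} (P : PsiSetting N 𝒞) (i : Fin N) :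
    StrictMonoOn (P.dψ i) 𝒞 :=
  strictMonoOn_of_strictConvexOn_of_hasDerivWithinAt (P.hconv i) (P.hderiv i)

lemma PsiSetting.monotoneOperatorOn_subdiffH {𝒞 : Set ℝ} (h𝒞 : 𝒞 = Set.univ ∨ 𝒞 = Set.Ici 0)
    (P : PsiSetting N 𝒞) (i : Fin N) {α : ℝ} (hα : 0 ≤ α) :
    MonotoneOperatorOn (subdiffH 𝒞 (P.dψ i) α) 𝒞 := by
  have hmono := (P.strictMonoOn_dψ i).monotoneOn
  rcases h𝒞 with rfl | rfl
  · exact monotoneOperatorOn_subdiffH_univ (monotoneOn_univ.1 hmono) (P.hodd rfl i) hα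
  · have hne : Set.Ici (0 : ℝ) ≠ Set.univ := fun h => not_bddBelow_univ (h ▸ bddBelow_Ici)
    exact monotoneOperatorOn_subdiffH_of_ne_univ hne hmono hα

lemma dotp_zmap_sub (S : FidSetting M N) (P : PsiSetting N S.𝒞) (x y : Fin N → ℝ) :
    dotp (zmap S P x - zmap S P y) (x - y) =
      dotp (P.gradPsi x - P.gradPsi y) (x - y) - dotp (S.gradF x - S.gradF y) (x - y) := by
  have zmap_eq (w : Fin N → ℝ) : zmap S P w = P.gradPsi w - S.gradF w := rfl
  rw [zmap_eq, zmap_eq, sub_sub_sub_comm, dotp_sub_left]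

lemma IsCritical.dotp_gradF_sub_le {S : FidSetting M N} {P : PsiSetting N S.𝒞}
    {α x y : Fin N → ℝ} (hα : ∀ i, 0 ≤ α i)
    (hx : IsCritical S P α x) (hy : IsCritical S P α y) :
    dotp (S.gradF x - S.gradF y) (x - y) ≤ dotp (P.gradPsi x - P.gradPsi y) (x - y) := by
  rw [← sub_nonneg, ← dotp_zmap_sub]
  exact dotp_sub_sub_nonneg (fun i => P.monotoneOperatorOn_subdiffH S.h𝒞 i (hα i))
    hx.1 hy.1 hx.2 hy.2

/-- An arbitrary `α ≥ 0` amounts to a penalty weight that varies with the coordinate, namely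
`λ_i = d_{ψ_i}(0, α_i)`. -/
theorem stmt9_general (S : FidSetting M N) (P : PsiSetting N S.𝒞) (α : Fin N → ℝ)
    (hα : ∀ i, 0 ≤ α i) (X : Set (Fin N → ℝ)) (K : ℕ) (CK : ℝ) (hCK : 1 < CK)
    (hBRSC : BRSCholds S P X K CK) :
    ∀ x ∈ X, ∀ xt, IsCritical S P α x → IsCritical S P α xt → norm0 (x - xt) ≤ K → x = xt := by
  intro x hx xt hcx hcxt hK
  by_contra hne
  have hpos : 0 < dotp (P.gradPsi x - P.gradPsi xt) (x - xt) :=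
    dotp_sub_sub_pos P.strictMonoOn_dψ hcx.1 hcxt.1 hne
  refine lt_irrefl (dotp (P.gradPsi x - P.gradPsi xt) (x - xt)) ?_
  calc dotp (P.gradPsi x - P.gradPsi xt) (x - xt)
      < CK * dotp (P.gradPsi x - P.gradPsi xt) (x - xt) := lt_mul_of_one_lt_left hpos hCK
    _ ≤ dotp (S.gradF x - S.gradF xt) (x - xt) := hBRSC x hx xt hcxt.1 hne hK
    _ ≤ dotp (P.gradPsi x - P.gradPsi xt) (x - xt) := hcx.dotp_gradF_sub_le hα hcxt

end CriticalPoint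

/-- Corollary 4.2: if `C_K > 1` then `J_Ψ` admits at most one critical
point in `X` of sparsity at most `K/2`. -/
theorem stmt9 {M N : ℕ} (S : FidSetting M N) (P : PsiSetting N S.𝒞)
    (lam0 : ℝ) (hlam0 : 0 < lam0) (α : Fin N → ℝ)
    (hα : ∀ i, 0 < α i ∧ dBreg (P.ψ i) (P.dψ i) 0 (α i) = lam0)
    (X : Set (Fin N → ℝ)) (hXfeas : X ⊆ S.feas) (K : ℕ) (CK : ℝ) (hCK : 1 < CK)
    (hBRSC : BRSCholds S P X K CK) :
    ∀ x ∈ X, ∀ xt ∈ X, IsCritical S P α x → IsCritical S P α xt →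
      2 * norm0 x ≤ K → 2 * norm0 xt ≤ K → x = xt := by
  intro x hx xt _ hcx hcxt hK hKt
  exact stmt9_general S P α (fun i => (hα i).1.le) X K CK hCK hBRSC x hx xt hcx hcxt
    ((norm0_sub_le x xt).trans (by omega))
end
end
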